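/- arXiv:1410.5119 — 3 statements merged into one kernel-verified Lean document; each statement's English description precedes it below -/
import Mathlib

section
/- Let G = (V,E,W) and H = (V,E,W') be two weighted graphs on the same finite node set V and edge set E. Then for every pair of nodes x, x' ∈ V such that there exists a path from x to x' (in both graphs, since they share the same edge set), the shortest path lengths satisfy |s_G(x,x') − s_H(x,x')| ≤ d_{(V,E)}(G,H). -/
/-! A closed sub-walk can be cut out of a walk without increasing its length, so only walks with
pairwise distinct nodes matter (`exists_nodup_walk`). Such a walk uses each edge of `E` at most
once, so changing the weights from `W` to `W'` changes its length by at most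
`∑ e ∈ E, |W e - W' e|` (`walkLength_le_of_nodup`). Applying this to an arbitrary walk and taking
infima gives `s_H ≤ s_G + d(G, H)`, and the claim follows by symmetry of `d`. -/

open scoped ENNReal

/-- `p` is the tail of a walk from `x` to `y` along edges of `E`:
the node sequence of the walk is `x :: p` and consecutive nodes are joined by edges in `E`. -/
def IsWalkFrom {V : Type*} (E : Finset (V × V)) (x y : V) (p : List V) : Prop :=
  List.Chain (fun a b => (a, b) ∈ E) x p ∧ (x :: p).getLast (List.cons_ne_nil x p) = y

/-- The length of the walk with node sequence `x :: p`: the sum of the weights of the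
traversed edges (as an extended nonnegative real). -/
noncomputable def walkLength {V : Type*} (W : V × V → ℝ) (x : V) (p : List V) : ℝ≥0∞ :=
  (((x :: p).zip p).map fun e => ENNReal.ofReal (W e)).sum

/-- Shortest path length `s_G(x,y)`: the infimum of the lengths of all paths from `x`
to `y`, equal to `∞` when no such path exists. -/
noncomputable def spdist {V : Type*} (E : Finset (V × V)) (W : V × V → ℝ) (x y : V) : ℝ≥0∞ :=
  sInf {l : ℝ≥0∞ | ∃ p : List V, IsWalkFrom E x y p ∧ l = walkLength W x p}

/-- The ℓ¹ metric `d_{(V,E)}` on the space of weighted graphs sharing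
the node set `V` and edge set `E`. -/
def graphDist {V : Type*} (E : Finset (V × V)) (W W' : V × V → ℝ) : ℝ :=
  ∑ e ∈ E, |W e - W' e|

lemma walkLength_cons {V : Type*} (W : V × V → ℝ) (x a : V) (p : List V) :
    walkLength W x (a :: p) = ENNReal.ofReal (W (x, a)) + walkLength W a p := by
  simp [walkLength]

lemma isWalkFrom_cons {V : Type*} {E : Finset (V × V)} {x y a : V} {p : List V} :
    IsWalkFrom E x y (a :: p) ↔ (x, a) ∈ E ∧ IsWalkFrom E a y p := by
  simp [IsWalkFrom, List.Chain, and_assoc]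

lemma walkLength_ne_top {V : Type*} (W : V × V → ℝ) (x : V) (p : List V) :
    walkLength W x p ≠ ∞ := by
  induction p generalizing x with
  | nil => simp [walkLength]
  | cons a p ih =>
    rw [walkLength_cons]
    exact ENNReal.add_ne_top.2 ⟨ENNReal.ofReal_ne_top, ih a⟩

/-- The final segment of a walk, starting at a node `x` that the walk visits. -/
lemma exists_walk_from_mem {V : Type*} {E : Finset (V × V)} (W : V × V → ℝ) {a x y : V}
    {q : List V} (hq : IsWalkFrom E a y q) (hn : (a :: q).Nodup) (hx : x ∈ a :: q) :
    ∃ t, IsWalkFrom E x y t ∧ (x :: t).Nodup ∧ walkLength W x t ≤ walkLength W a q := by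
  induction q generalizing a with
  | nil =>
    obtain rfl : x = a := by simpa using hx
    exact ⟨[], hq, hn, le_rfl⟩
  | cons b q ih =>
    rcases List.mem_cons.1 hx with rfl | hx
    · exact ⟨b :: q, hq, hn, le_rfl⟩
    · obtain ⟨t, h1, h2, h3⟩ := ih (isWalkFrom_cons.1 hq).2 (List.nodup_cons.1 hn).2 hx
      refine ⟨t, h1, h2, h3.trans ?_⟩
      rw [walkLength_cons]
      exact le_add_self

/-- Loop erasure: every walk can be replaced by one with pairwise distinct nodes that is no
longer. -/
lemma exists_nodup_walk {V : Type*} {E : Finset (V × V)} (W : V × V → ℝ) {x y : V}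
    {p : List V} (hp : IsWalkFrom E x y p) :
    ∃ q, IsWalkFrom E x y q ∧ (x :: q).Nodup ∧ walkLength W x q ≤ walkLength W x p := by
  induction p generalizing x with
  | nil => exact ⟨[], hp, by simp, le_rfl⟩
  | cons a p ih =>
    obtain ⟨hxa, hap⟩ := isWalkFrom_cons.1 hp
    obtain ⟨q, h1, h2, h3⟩ := ih hap
    by_cases hx : x ∈ a :: q
    · obtain ⟨t, t1, t2, t3⟩ := exists_walk_from_mem W h1 h2 hx
      refine ⟨t, t1, t2, (t3.trans h3).trans ?_⟩
      rw [walkLength_cons]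
      exact le_add_self
    · refine ⟨a :: q, isWalkFrom_cons.2 ⟨hxa, h1⟩, List.nodup_cons.2 ⟨hx, h2⟩, ?_⟩
      rw [walkLength_cons, walkLength_cons]
      gcongr

lemma walkLength_le_add {V : Type*} (W W' : V × V → ℝ) (x : V) (p : List V) :
    walkLength W' x p ≤ walkLength W x p + walkLength (fun e => |W e - W' e|) x p := by
  induction p generalizing x with
  | nil => simp [walkLength]
  | cons a p ih =>
    simp only [walkLength_cons]
    have h : ENNReal.ofReal (W' (x, a)) ≤
        ENNReal.ofReal (W (x, a)) + ENNReal.ofReal |W (x, a) - W' (x, a)| := by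
      refine (ENNReal.ofReal_le_ofReal ?_).trans ENNReal.ofReal_add_le
      linarith [neg_abs_le (W (x, a) - W' (x, a)), le_abs_self (W (x, a) - W' (x, a))]
    exact (add_le_add h (ih a)).trans_eq (add_add_add_comm _ _ _ _)

lemma mem_of_mem_zip_walk {V : Type*} {E : Finset (V × V)} {x y : V} {p : List V}
    (hp : IsWalkFrom E x y p) : ∀ e ∈ (x :: p).zip p, e ∈ E := by
  induction p generalizing x with
  | nil => simp
  | cons a p ih =>
    obtain ⟨hxa, hap⟩ := isWalkFrom_cons.1 hp
    intro e he
    rw [List.zip_cons_cons, List.mem_cons] at he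
    rcases he with rfl | he
    · exact hxa
    · exact ih hap e he

/-- A walk with distinct nodes traverses distinct edges, because the edges have distinct
targets. -/
lemma nodup_zip_walk {V : Type*} {x : V} {p : List V} (hn : (x :: p).Nodup) :
    ((x :: p).zip p).Nodup := by
  apply List.Nodup.of_map Prod.snd
  rw [List.map_snd_zip (by simp)]
  exact (List.nodup_cons.1 hn).2

lemma walkLength_le_of_nodup {V : Type*} {E : Finset (V × V)} (W W' : V × V → ℝ) {x y : V}
    {p : List V} (hp : IsWalkFrom E x y p) (hn : (x :: p).Nodup) :
    walkLength W' x p ≤ walkLength W x p + ENNReal.ofReal (graphDist E W W') := by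
  classical
  refine (walkLength_le_add W W' x p).trans ?_
  gcongr
  rw [graphDist, ENNReal.ofReal_sum_of_nonneg fun _ _ => abs_nonneg _, walkLength,
    ← List.sum_toFinset _ (nodup_zip_walk hn)]
  apply Finset.sum_le_sum_of_subset
  intro e he
  exact mem_of_mem_zip_walk hp e (List.mem_toFinset.1 he)

lemma spdist_le_add {V : Type*} (E : Finset (V × V)) (W W' : V × V → ℝ) (x y : V) :
    spdist E W' x y ≤ spdist E W x y + ENNReal.ofReal (graphDist E W W') := by
  rw [← tsub_le_iff_right]
  refine le_sInf ?_
  rintro _ ⟨p, hp, rfl⟩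
  rw [tsub_le_iff_right]
  obtain ⟨q, hq, hn, hle⟩ := exists_nodup_walk W hp
  calc spdist E W' x y ≤ walkLength W' x q := sInf_le ⟨q, hq, rfl⟩
    _ ≤ walkLength W x q + ENNReal.ofReal (graphDist E W W') := walkLength_le_of_nodup W W' hq hn
    _ ≤ _ := by gcongr

lemma spdist_ne_top {V : Type*} {E : Finset (V × V)} (W : V × V → ℝ) {x y : V}
    (h : ∃ p : List V, IsWalkFrom E x y p) : spdist E W x y ≠ ∞ := by
  obtain ⟨p, hp⟩ := h
  exact ne_top_of_le_ne_top (walkLength_ne_top W x p) (sInf_le ⟨p, hp, rfl⟩)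

lemma toReal_spdist_le_add {V : Type*} {E : Finset (V × V)} (W W' : V × V → ℝ) {x y : V}
    (h : ∃ p : List V, IsWalkFrom E x y p) :
    (spdist E W' x y).toReal ≤ (spdist E W x y).toReal + graphDist E W W' := by
  have hd : 0 ≤ graphDist E W W' := Finset.sum_nonneg fun _ _ => abs_nonneg _
  have := ENNReal.toReal_mono (ENNReal.add_ne_top.2 ⟨spdist_ne_top W h, ENNReal.ofReal_ne_top⟩)
    (spdist_le_add E W W' x y)
  rwa [ENNReal.toReal_add (spdist_ne_top W h) ENNReal.ofReal_ne_top,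
    ENNReal.toReal_ofReal hd] at this

/-- Lemma 1: for graphs `G=(V,E,W)` and `H=(V,E,W')` and nodes `x,x'`
such that `x` is connected to `x'`, `|s_G(x,x') - s_H(x,x')| ≤ d_{(V,E)}(G,H)`. -/
theorem shortest_path_difference_le_graphDist
    {V : Type*} [Fintype V] [DecidableEq V]
    (E : Finset (V × V)) (hE : ∀ e ∈ E, e.1 ≠ e.2)
    (W W' : V × V → ℝ)
    (hW : ∀ e ∈ E, 0 < W e) (hW' : ∀ e ∈ E, 0 < W' e)
    (x x' : V) (hconn : ∃ p : List V, IsWalkFrom E x x' p) :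
    |(spdist E W x x').toReal - (spdist E W' x x').toReal| ≤ graphDist E W W' := by
  have h1 := toReal_spdist_le_add W W' hconn
  have h2 := toReal_spdist_le_add W' W hconn
  have hsymm : graphDist E W' W = graphDist E W W' :=
    Finset.sum_congr rfl fun _ _ => abs_sub_comm _ _
  rw [abs_le]
  constructor <;> linarith
end

section
/- Let G = (V,E,W) and H = (V,E,W') be connected undirected weighted graphs on the same node set V of n nodes and the same edge set E, with symmetric nonnegative adjacency matrices A and B having zero diagonal and the same zero pattern. Let λ_n > λ_{n−1} ≥ … ≥ λ_1 be the eigenvalues of A and let δ = λ_n − λ_{n−1} > 0. Let v and u be the unit-norm dominant eigenvectors (with positive entries, guaranteed by the Perron–Frobenius theorem) of A and B respectively. Then for every node x, |v(x) − u(x)| ≤ (4/δ) · d_{(V,E)}(G,H), where d_{(V,E)}(G,H) = ∑_{i,j} |A_{ij} − B_{ij}|. In particular, eigenvector centrality is a stable centrality measure with stability constant K_G = 4/(λ_n − λ_{n−1}). -/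
/-!
Write `E = A - B`, `S = ∑ |E i j|`, `c = v ⬝ u` and `d = ‖v - u‖`, so that `0 ≤ c ≤ 1` and
`d ^ 2 = 2 * (1 - c)`.

* Dirichlet form identity (`dirichlet_form`): if `A v = lam v` with `v > 0`, then
  `lam * (w ⬝ w) - w ⬝ A w = (1 / 2) * ∑ A i j * v i * v j * (w i / v i - w j / v j) ^ 2`.
  For nonnegative `A` it gives `w ⬝ A w ≤ lam * (w ⬝ w)`, and for connected `A` it shows that
  every eigenvector for `lam` is a multiple of `v`.
* Hence every member of an orthonormal eigenbasis that is not orthogonal to `w ⊥ v` has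
  eigenvalue at most `lam - δ`, so `w ⬝ A w ≤ (lam - δ) * (w ⬝ w)` (`gap_quadratic`).
* Splitting `u = c v + w` gives `u ⬝ A u ≤ lam - δ * (1 - c ^ 2)`, while `v ⬝ B v ≤ mu = u ⬝ B u`.
  Together, `δ * (1 - c ^ 2) ≤ v ⬝ E v - u ⬝ E u ≤ 2 * S * d`, the last step because
  `|v i * v j - u i * u j| ≤ 2 * d` entrywise. Since `1 - c ^ 2 ≥ 1 - c = d ^ 2 / 2`,
  this yields `d ≤ 4 * S / δ`.
-/

open Matrix in
/-- The defect in the Rayleigh bound, written as a Dirichlet form of `w / v`. -/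
lemma dirichlet_form {n : ℕ} {A : Matrix (Fin n) (Fin n) ℝ} (hA : A.IsSymm)
    {lam : ℝ} {v : Fin n → ℝ} (hv : A *ᵥ v = lam • v) (hvpos : ∀ i, 0 < v i)
    (w : Fin n → ℝ) :
    lam * (w ⬝ᵥ w) - w ⬝ᵥ A *ᵥ w =
      (1 / 2) * ∑ i, ∑ j, A i j * (v i * v j) * (w i / v i - w j / v j) ^ 2 := by
  have key : ∀ i j, A i j * (v i * v j) * (w i / v i - w j / v j) ^ 2 =
      (w i ^ 2 / v i) * (A i j * v j) + (w j ^ 2 / v j) * (A j i * v i)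
        - 2 * (w i * (A i j * w j)) := by
    intro i j
    have h1 := (hvpos i).ne'
    have h2 := (hvpos j).ne'
    rw [hA.apply i j]
    field_simp
    ring
  have row : ∀ i, ∑ j, A i j * v j = lam * v i := fun i => by
    simpa [mulVec, dotProduct] using congrFun hv i
  have diag : ∑ i, (w i ^ 2 / v i) * ∑ j, A i j * v j = lam * (w ⬝ᵥ w) := by
    simp only [dotProduct, Finset.mul_sum]
    rw [← Finset.sum_congr rfl fun i _ => Finset.mul_sum _ _ _]
    refine Finset.sum_congr rfl fun i _ => ?_
    have h1 := (hvpos i).ne'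
    rw [row]
    field_simp
  have swap : ∑ i, ∑ j, (w j ^ 2 / v j) * (A j i * v i) = lam * (w ⬝ᵥ w) := by
    rw [Finset.sum_comm, ← diag]
    simp only [Finset.mul_sum]
  have cross : ∑ i, ∑ j, 2 * (w i * (A i j * w j)) = 2 * (w ⬝ᵥ A *ᵥ w) := by
    simp only [dotProduct, mulVec, Finset.mul_sum]
  simp only [key, Finset.sum_add_distrib, Finset.sum_sub_distrib, swap, cross]
  simp only [← Finset.mul_sum]
  rw [diag]
  ring

open Matrix in
/-- A positive eigenvector of a nonnegative symmetric matrix belongs to the top eigenvalue: its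
eigenvalue bounds the quadratic form. -/
lemma rayleigh_le {n : ℕ} {A : Matrix (Fin n) (Fin n) ℝ} (hA : A.IsSymm)
    (hAnonneg : ∀ i j, 0 ≤ A i j)
    {lam : ℝ} {v : Fin n → ℝ} (hv : A *ᵥ v = lam • v) (hvpos : ∀ i, 0 < v i)
    (w : Fin n → ℝ) : w ⬝ᵥ A *ᵥ w ≤ lam * (w ⬝ᵥ w) := by
  have h := dirichlet_form hA hv hvpos w
  have : 0 ≤ ∑ i, ∑ j, A i j * (v i * v j) * (w i / v i - w j / v j) ^ 2 :=
    Finset.sum_nonneg fun i _ => Finset.sum_nonneg fun j _ =>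
      mul_nonneg (mul_nonneg (hAnonneg i j) (mul_pos (hvpos i) (hvpos j)).le) (sq_nonneg _)
  linarith

open Matrix in
/-- Simplicity of the Perron eigenvalue: the Dirichlet form of an eigenvector `w` for `lam`
vanishes, so `w / v` is constant along edges, hence constant by connectedness. -/
lemma perron_simple {n : ℕ} {A : Matrix (Fin n) (Fin n) ℝ} (hA : A.IsSymm)
    (hAnonneg : ∀ i j, 0 ≤ A i j)
    (hAconn : ∀ i j : Fin n, Relation.ReflTransGen (fun a b => A a b ≠ 0) i j)
    {lam : ℝ} {v : Fin n → ℝ} (hv : A *ᵥ v = lam • v) (hvpos : ∀ i, 0 < v i)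
    {w : Fin n → ℝ} (hw : A *ᵥ w = lam • w) (i j : Fin n) : w i / v i = w j / v j := by
  have h := dirichlet_form hA hv hvpos w
  rw [hw, dotProduct_smul, smul_eq_mul, sub_self] at h
  have nn : ∀ i j, 0 ≤ A i j * (v i * v j) * (w i / v i - w j / v j) ^ 2 := fun i j =>
    mul_nonneg (mul_nonneg (hAnonneg i j) (mul_pos (hvpos i) (hvpos j)).le) (sq_nonneg _)
  have h0 : ∑ i, ∑ j, A i j * (v i * v j) * (w i / v i - w j / v j) ^ 2 = 0 := by linarith
  have edge : ∀ a b, A a b ≠ 0 → w a / v a = w b / v b := by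
    intro a b hab
    have h1 := (Finset.sum_eq_zero_iff_of_nonneg fun i _ =>
      Finset.sum_nonneg fun j _ => nn i j).1 h0 a (Finset.mem_univ _)
    have h2 := (Finset.sum_eq_zero_iff_of_nonneg fun j _ => nn a j).1 h1 b (Finset.mem_univ _)
    have h3 : A a b * (v a * v b) ≠ 0 := mul_ne_zero hab (mul_pos (hvpos a) (hvpos b)).ne'
    have h4 := pow_eq_zero_iff (two_ne_zero) |>.1 ((mul_eq_zero.1 h2).resolve_left h3)
    linarith
  induction hAconn i j with
  | refl => rfl
  | tail _ hbc ih => exact ih.trans (edge _ _ hbc)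

open Matrix in
/-- On the orthogonal complement of the Perron vector, the spectral gap bounds the quadratic
form. -/
lemma gap_quadratic {n : ℕ} {A : Matrix (Fin n) (Fin n) ℝ} (hA : A.IsSymm)
    (hAnonneg : ∀ i j, 0 ≤ A i j)
    (hAconn : ∀ i j : Fin n, Relation.ReflTransGen (fun a b => A a b ≠ 0) i j)
    {lam : ℝ} {v : Fin n → ℝ} (hv : A *ᵥ v = lam • v) (hvpos : ∀ i, 0 < v i)
    {δ : ℝ} (hgap : ∀ t : ℝ, (∃ w : Fin n → ℝ, w ≠ 0 ∧ A *ᵥ w = t • w) → t ≠ lam →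
      t ≤ lam - δ)
    {w : Fin n → ℝ} (hw : v ⬝ᵥ w = 0) : w ⬝ᵥ A *ᵥ w ≤ (lam - δ) * (w ⬝ᵥ w) := by
  have hH : A.IsHermitian := by
    rw [IsHermitian, conjTranspose_eq_transpose_of_trivial]; exact hA
  let e := hH.eigenvectorBasis
  let ev := hH.eigenvalues
  let f : Fin n → Fin n → ℝ := fun k => (e k).ofLp
  have hf : ∀ k, A *ᵥ f k = ev k • f k := fun k => hH.mulVec_eigenvectorBasis k
  have parseval : ∀ x y : Fin n → ℝ, x ⬝ᵥ y = ∑ k, (f k ⬝ᵥ x) * (f k ⬝ᵥ y) := by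
    intro x y
    have h := e.sum_inner_mul_inner (WithLp.toLp 2 x) (WithLp.toLp 2 y)
    simp only [EuclideanSpace.inner_eq_star_dotProduct, star_trivial] at h
    rw [dotProduct_comm x y, ← h]
    exact Finset.sum_congr rfl fun k _ => by rw [dotProduct_comm y]
  have adj : ∀ k, f k ⬝ᵥ A *ᵥ w = ev k * (f k ⬝ᵥ w) := by
    intro k
    rw [dotProduct_mulVec, ← mulVec_transpose, hA.eq, hf, smul_dotProduct, smul_eq_mul]
  rw [parseval w (A *ᵥ w), parseval w w, Finset.mul_sum]
  refine Finset.sum_le_sum fun k _ => ?_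
  rw [adj]
  by_cases hk : ev k = lam
  · have hz : f k ⬝ᵥ w = 0 := by
      have hfk : A *ᵥ f k = lam • f k := hk ▸ hf k
      have hc := perron_simple hA hAnonneg hAconn hv hvpos hfk
      have : f k = (f k k / v k) • v := by
        ext i
        have := (hvpos i).ne'
        simp [hc k i, this]
      rw [this, smul_dotProduct, hw, smul_zero]
    simp [hz]
  · have hne : f k ≠ 0 := by
      intro h0
      have := e.orthonormal.ne_zero k
      exact this (WithLp.ofLp_injective 2 h0)
    have := hgap (ev k) ⟨f k, hne, hf k⟩ hk
    nlinarith [mul_self_nonneg (f k ⬝ᵥ w)]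

theorem eigenvector_centrality_stable {n : ℕ}
    (A B : Matrix (Fin n) (Fin n) ℝ)
    (hAsymm : A.IsSymm) (hBsymm : B.IsSymm)
    (hAnonneg : ∀ i j, 0 ≤ A i j) (hBnonneg : ∀ i j, 0 ≤ B i j)
    (hAdiag : ∀ i, A i i = 0) (hBdiag : ∀ i, B i i = 0)
    (hpattern : ∀ i j, A i j = 0 ↔ B i j = 0)
    (hAconn : ∀ i j : Fin n, Relation.ReflTransGen (fun a b => A a b ≠ 0) i j)
    (hBconn : ∀ i j : Fin n, Relation.ReflTransGen (fun a b => B a b ≠ 0) i j)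
    (lam mu : ℝ) (v u : Fin n → ℝ)
    (hv : A.mulVec v = lam • v) (hu : B.mulVec u = mu • u)
    (hvunit : ∑ i, v i ^ 2 = 1) (huunit : ∑ i, u i ^ 2 = 1)
    (hvpos : ∀ i, 0 < v i) (hupos : ∀ i, 0 < u i)
    (hlam_max : ∀ t : ℝ, (∃ w : Fin n → ℝ, w ≠ 0 ∧ A.mulVec w = t • w) → t ≤ lam)
    (hmu_max : ∀ t : ℝ, (∃ w : Fin n → ℝ, w ≠ 0 ∧ B.mulVec w = t • w) → t ≤ mu)
    (δ : ℝ) (hδ : 0 < δ)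
    (hgap : ∀ t : ℝ, (∃ w : Fin n → ℝ, w ≠ 0 ∧ A.mulVec w = t • w) → t ≠ lam →
      t ≤ lam - δ) :
    ∀ x : Fin n, |v x - u x| ≤ (4 / δ) * ∑ i, ∑ j, |A i j - B i j| := by
  open Matrix in
  focus
    intro x
    set S := ∑ i, ∑ j, |A i j - B i j| with hS
    set c := v ⬝ᵥ u with hc
    have hvv : v ⬝ᵥ v = 1 := by simpa [dotProduct, sq] using hvunit
    have huu : u ⬝ᵥ u = 1 := by simpa [dotProduct, sq] using huunit
    have huv : u ⬝ᵥ v = c := dotProduct_comm _ _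
    have hc0 : 0 ≤ c := Finset.sum_nonneg fun i _ => (mul_pos (hvpos i) (hupos i)).le
    have hd2 : ∑ i, (v i - u i) ^ 2 = 2 * (1 - c) := by
      have : ∀ i, (v i - u i) ^ 2 = v i ^ 2 + u i ^ 2 - 2 * (v i * u i) := fun i => by ring
      simp only [this, Finset.sum_sub_distrib, Finset.sum_add_distrib, ← Finset.mul_sum, hvunit,
        huunit]
      simp only [hc, dotProduct]
      ring
    set d := √(2 * (1 - c)) with hd
    have hd0 : 0 ≤ d := Real.sqrt_nonneg _
    have hdsq : d ^ 2 = 2 * (1 - c) :=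
      Real.sq_sqrt (hd2 ▸ Finset.sum_nonneg fun i _ => sq_nonneg _)
    have hent : ∀ i, |v i - u i| ≤ d := by
      intro i
      refine Real.abs_le_sqrt ?_
      rw [← hd2]
      exact Finset.single_le_sum (f := fun i => (v i - u i) ^ 2) (fun i _ => sq_nonneg _)
        (Finset.mem_univ i)
    have le_one : ∀ y : Fin n → ℝ, ∑ i, y i ^ 2 = 1 → ∀ i, |y i| ≤ 1 := by
      intro y hy i
      rw [← sq_le_one_iff_abs_le_one, ← hy]
      exact Finset.single_le_sum (f := fun i => y i ^ 2) (fun i _ => sq_nonneg _)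
        (Finset.mem_univ i)
    have hgapu : u ⬝ᵥ A *ᵥ u ≤ lam - δ * (1 - c ^ 2) := by
      -- component of `u` orthogonal to `v`
      set w := u - c • v with hw
      have hvw : v ⬝ᵥ w = 0 := by
        rw [hw, dotProduct_sub, dotProduct_smul, hvv, smul_eq_mul]; ring
      have hww : w ⬝ᵥ w = 1 - c ^ 2 := by
        simp only [hw, dotProduct_sub, sub_dotProduct, dotProduct_smul, smul_dotProduct, hvv, huu,
          huv, smul_eq_mul, ← hc]
        ring
      have hvA : v ⬝ᵥ A *ᵥ u = lam * c := by
        rw [dotProduct_mulVec, ← mulVec_transpose, hAsymm.eq, hv, smul_dotProduct, smul_eq_mul]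
      have hwA : w ⬝ᵥ A *ᵥ w = u ⬝ᵥ A *ᵥ u - lam * c ^ 2 := by
        simp only [hw, mulVec_sub, mulVec_smul, hv, dotProduct_sub, sub_dotProduct,
          dotProduct_smul, smul_dotProduct, hvv, huv, hvA, smul_eq_mul]
        ring
      have h := gap_quadratic hAsymm hAnonneg hAconn hv hvpos hgap hvw
      rw [hwA, hww] at h
      linarith
    have hBv : v ⬝ᵥ B *ᵥ v ≤ mu := by
      simpa [hvv] using rayleigh_le hBsymm hBnonneg hu hupos v
    have hBu : u ⬝ᵥ B *ᵥ u = mu := by rw [hu, dotProduct_smul, huu, smul_eq_mul, mul_one]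
    have hAv : v ⬝ᵥ A *ᵥ v = lam := by rw [hv, dotProduct_smul, hvv, smul_eq_mul, mul_one]
    have hE : (v ⬝ᵥ A *ᵥ v - v ⬝ᵥ B *ᵥ v) - (u ⬝ᵥ A *ᵥ u - u ⬝ᵥ B *ᵥ u) ≤ 2 * d * S := by
      have expand : (v ⬝ᵥ A *ᵥ v - v ⬝ᵥ B *ᵥ v) - (u ⬝ᵥ A *ᵥ u - u ⬝ᵥ B *ᵥ u) =
          ∑ i, ∑ j, (A i j - B i j) * (v i * v j - u i * u j) := by
        simp only [dotProduct, mulVec, Finset.mul_sum, ← Finset.sum_sub_distrib]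
        exact Finset.sum_congr rfl fun i _ => Finset.sum_congr rfl fun j _ => by ring
      rw [expand, hS, Finset.mul_sum]
      refine Finset.sum_le_sum fun i _ => ?_
      rw [Finset.mul_sum]
      refine Finset.sum_le_sum fun j _ => ?_
      have hb : |v i * v j - u i * u j| ≤ 2 * d := by
        have : v i * v j - u i * u j = v i * (v j - u j) + u j * (v i - u i) := by ring
        rw [this]
        refine (abs_add_le _ _).trans ?_
        rw [abs_mul, abs_mul]
        have h1 := mul_le_mul (le_one v hvunit i) (hent j) (abs_nonneg _) zero_le_one
        have h2 := mul_le_mul (le_one u huunit j) (hent i) (abs_nonneg _) zero_le_one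
        linarith
      calc (A i j - B i j) * (v i * v j - u i * u j)
          ≤ |A i j - B i j| * |v i * v j - u i * u j| := by
            rw [← abs_mul]; exact le_abs_self _
        _ ≤ |A i j - B i j| * (2 * d) := mul_le_mul_of_nonneg_left hb (abs_nonneg _)
        _ = 2 * d * |A i j - B i j| := mul_comm _ _
    have hmain : δ * (1 - c ^ 2) ≤ 2 * d * S := by linarith
    have hS0 : 0 ≤ S := Finset.sum_nonneg fun i _ => Finset.sum_nonneg fun j _ => abs_nonneg _
    have hquad : δ * d * d ≤ 4 * S * d := by
      have hc1 : 0 ≤ 1 - c := by nlinarith [sq_nonneg d]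
      have : δ * (1 - c) ≤ δ * (1 - c ^ 2) :=
        mul_le_mul_of_nonneg_left (by nlinarith) hδ.le
      nlinarith
    have hdS : d ≤ 4 / δ * S := by
      rcases hd0.eq_or_lt with h0 | hpos
      · rw [← h0]; positivity
      · have := le_of_mul_le_mul_right hquad hpos
        rw [div_mul_eq_mul_div, le_div_iff₀ hδ]
        linarith
    exact (hent x).trans hdS
end

section
/- The degree squared centrality measure C_DS is not stable: there exist a node set V, an edge set E, a weighted graph G ∈ 𝒢_{(V,E)}, and a node x ∈ V such that for every constant K > 0 there exists H ∈ 𝒢_{(V,E)} with |C_DS^G(x) − C_DS^H(x)| > K · d_{(V,E)}(G,H). Concretely, take V = {x, x'} with the undirected edge between x and x' of weight 1 in G and weight 1+δ in H for δ > 0; then d_{(V,E)}(G,H) = 2δ, C_DS^G(x) = 1, C_DS^H(x) = (1+δ)², and the required inequality |1 − (1+δ)²| ≤ K·2δ fails for δ > 2(K − 1). -/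
/-- Degree squared centrality `C_DS(x) = ∑_{x' : (x,x') ∈ E} (W (x,x'))²`. -/
def degreeSquared {V : Type*} [DecidableEq V] (E : Finset (V × V))
    (W : V × V → ℝ) (x : V) : ℝ :=
  ∑ e ∈ E.filter (fun e => e.1 = x), (W e) ^ 2

/-- The two-node graph with a single undirected edge (both directed edges) between
its nodes `0` and `1`. -/
def twoNodeEdges : Finset (Fin 2 × Fin 2) := {(0, 1), (1, 0)}

/-- degree squared centrality is not stable.  On the two-node graph with
weight `1` in `G` and weight `1 + δ` in `H` one has `d_{(V,E)}(G,H) = 2δ`,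
`C_DS^G(x) = 1` and `C_DS^H(x) = (1+δ)²`, and for every candidate constant `K > 0`
there is a graph `H ∈ 𝒢_{(V,E)}` with `|C_DS^G(x) - C_DS^H(x)| > K ⬝ d_{(V,E)}(G,H)`. -/
theorem degreeSquared_not_stable :
    (∀ δ : ℝ, 0 < δ →
      graphDist twoNodeEdges (fun _ => 1) (fun _ => 1 + δ) = 2 * δ ∧
      degreeSquared twoNodeEdges (fun _ => 1) (0 : Fin 2) = 1 ∧
      degreeSquared twoNodeEdges (fun _ => 1 + δ) (0 : Fin 2) = (1 + δ) ^ 2) ∧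
    (∀ K : ℝ, 0 < K → ∃ W' : Fin 2 × Fin 2 → ℝ, (∀ e ∈ twoNodeEdges, 0 < W' e) ∧
      K * graphDist twoNodeEdges (fun _ => 1) W' <
        |degreeSquared twoNodeEdges (fun _ => 1) (0 : Fin 2) -
          degreeSquared twoNodeEdges W' (0 : Fin 2)|) := by
  have hd : ∀ δ : ℝ, 0 < δ →
      graphDist twoNodeEdges (fun _ => 1) (fun _ => 1 + δ) = 2 * δ := by
    intro δ hδ
    simp [graphDist, twoNodeEdges, abs_of_pos hδ]
  have hs : ∀ w : ℝ, degreeSquared twoNodeEdges (fun _ => w) (0 : Fin 2) = w ^ 2 := by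
    intro w
    simp [degreeSquared, twoNodeEdges, Finset.filter_insert, Finset.filter_singleton]
  refine ⟨fun δ hδ => ⟨hd δ hδ, by rw [hs, one_pow], hs _⟩, fun K hK => ?_⟩
  -- With `δ = 2 * K` the two sides are `4 * K ^ 2` and `4 * K + 4 * K ^ 2`.
  refine ⟨fun _ => 1 + 2 * K, fun _ _ => by positivity, ?_⟩
  rw [hd _ (by positivity), hs, hs, abs_sub_comm]
  exact lt_of_lt_of_le (by nlinarith) (le_abs_self _)
end
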